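/- arXiv:2501.14716 — 3 statements merged into one kernel-verified Lean document; each statement's English description precedes it below -/
import Mathlib

section
/- Let h ≥ 1 and ℓ be integers with 0 ≤ ℓ ≤ h−1, and let k be an integer with h+ℓ ≤ k < 2h. Then Σ_{i=0}^{h−ℓ} (−1)^{i+h−ℓ} · binom(h−ℓ, i) · binom(k−i−ℓ+h, 2h) = (−1)^{h−ℓ} · binom(k, k−h−ℓ), as an identity of integers (or rationals). -/
/-!
Put `n = h - ℓ`. Since `2h = (h + ℓ) + n` and `k - i - ℓ + h = k + n - i`, the sum is, up to the
sign `(-1) ^ n`, the `n`-th forward difference at `k` of `x ↦ binom(x, (h + ℓ) + n)`. By Pascal's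
rule each difference lowers the bottom index by one, so its value is
`binom(k, h + ℓ) = binom(k, k - h - ℓ)`.
-/

theorem fwdDiff_iter_eq_sum_shift_reflect {M G : Type*} [AddCommMonoid M] [AddCommGroup G]
    (h : M) (f : M → G) (n : ℕ) (y : M) :
    (fwdDiff h)^[n] f y =
      ∑ i ∈ Finset.range (n + 1), ((-1 : ℤ) ^ i * n.choose i) • f (y + (n - i) • h) := by
  rw [fwdDiff_iter_eq_sum_shift, ← Finset.sum_range_reflect]
  refine Finset.sum_congr rfl fun i hi => ?_
  have hin : i ≤ n := Finset.mem_range_succ_iff.mp hi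
  rw [Nat.add_sub_cancel, Nat.sub_sub_self hin, Nat.choose_symm hin]

theorem sum_neg_one_pow_mul_choose_mul_choose_add_sub (n m p : ℕ) :
    ∑ i ∈ Finset.range (n + 1),
        (-1 : ℤ) ^ i * (n.choose i : ℤ) * ((m + n - i).choose (p + n) : ℤ) = m.choose p := by
  rw [← congrFun (fwdDiff_iter_choose p n) m, fwdDiff_iter_eq_sum_shift_reflect]
  refine Finset.sum_congr rfl fun i hi => ?_
  have hin : i ≤ n := Finset.mem_range_succ_iff.mp hi
  rw [smul_eq_mul, smul_eq_mul, mul_one, Nat.add_sub_assoc hin, add_comm p n]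

theorem statement8_general (h l k : ℕ) (hl : l ≤ h) (hk : h + l ≤ k) :
    ∑ i ∈ Finset.range (h - l + 1),
        (-1 : ℤ) ^ (i + h - l) * ((h - l).choose i : ℤ) * ((k - i - l + h).choose (2 * h) : ℤ)
      = (-1 : ℤ) ^ (h - l) * (k.choose (k - h - l) : ℤ) := by
  rw [Nat.sub_sub, Nat.choose_symm hk, ← sum_neg_one_pow_mul_choose_mul_choose_add_sub (h - l),
    Finset.mul_sum]
  refine Finset.sum_congr rfl fun i hi => ?_
  have hi' : i ≤ h - l := Finset.mem_range_succ_iff.mp hi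
  have hsign : i + h - l = (h - l) + i := by omega
  have htop : k - i - l + h = k + (h - l) - i := by omega
  have hbot : 2 * h = h + l + (h - l) := by omega
  rw [hsign, htop, hbot, pow_add]
  ring

/-- For integers `1 ≤ h`, `0 ≤ ℓ ≤ h−1` and `h+ℓ ≤ k < 2h`:
`Σ_{i=0}^{h−ℓ} (−1)^{i+h−ℓ}·binom(h−ℓ,i)·binom(k−i−ℓ+h, 2h) = (−1)^{h−ℓ}·binom(k, k−h−ℓ)`. -/
theorem statement8 (h l k : ℕ) (hh : 1 ≤ h) (hl : l ≤ h - 1)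
    (hk1 : h + l ≤ k) (hk2 : k < 2 * h) :
    ∑ i ∈ Finset.range (h - l + 1),
        (-1 : ℤ) ^ (i + h - l) * ((h - l).choose i : ℤ) * ((k - i - l + h).choose (2 * h) : ℤ)
      = (-1 : ℤ) ^ (h - l) * (k.choose (k - h - l) : ℤ) :=
  statement8_general h l k (hl.trans (Nat.sub_le h 1)) hk1
end

section
/- Let x, s be quaternions with ‖x‖ < ‖s‖. For each k ∈ ℕ define H_k(x) := Σ_{ℓ=0}^{k} x^{k−ℓ} · x̄^{ℓ}. Then the family k ↦ H_k(x) · (s^{k+2})⁻¹ is summable in ℍ and Σ_{k=0}^{∞} H_k(x) · (s^{k+2})⁻¹ = (s² − 2(re x)·s + ‖x‖²)⁻¹. (In particular s ≠ 0 and s² − 2(re x)·s + ‖x‖² ≠ 0 under the hypothesis.) -/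
open Quaternion

/-- The axially polyharmonic polynomials `H_k(x) = Σ_{ℓ=0}^{k} x^{k−ℓ}·x̄^{ℓ}`. -/
noncomputable def Hpoly (x : ℍ[ℝ]) (k : ℕ) : ℍ[ℝ] :=
  ∑ l ∈ Finset.range (k + 1), x ^ (k - l) * (star x) ^ l

/-!
`H_k(x)` is the complete homogeneous polynomial `h_k(a, b)` at `a = x`, `b = x̄`. The recursion
`h_{k+1}(a, b) = a·h_k(a, b) + b^{k+1}` and the geometric series show that
`G = Σ h_k(a, b)·u^k` is obtained from `1` by inverting the two operators `G ↦ G - a·G·u` and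
`G ↦ G - b·G·u`, even when nothing commutes. Composing them gives
`G - (a + b)·G·u + b·a·G·u² = 1`. For `a = x` and `b = x̄` the trace `a + b` and the norm `a·b` are
real, so they can be moved to the right of `G`; then put `u = s⁻¹`.
-/

section Semiring

variable {R : Type*} [Semiring R]

/-- The complete homogeneous polynomial `h_k(a, b)` of degree `k` in two variables. The variables
need not commute: the powers of `a` are written to the left of those of `b`. -/
def completeHomogeneous (a b : R) (k : ℕ) : R :=
  ∑ l ∈ Finset.range (k + 1), a ^ (k - l) * b ^ l

theorem completeHomogeneous_zero (a b : R) : completeHomogeneous a b 0 = 1 := by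
  simp [completeHomogeneous]

theorem completeHomogeneous_succ (a b : R) (k : ℕ) :
    completeHomogeneous a b (k + 1) = a * completeHomogeneous a b k + b ^ (k + 1) := by
  rw [completeHomogeneous, Finset.sum_range_succ, completeHomogeneous, Finset.mul_sum,
    Nat.sub_self, pow_zero, one_mul]
  congr 1
  refine Finset.sum_congr rfl fun l hl => ?_
  rw [Nat.sub_add_comm (Finset.mem_range_succ_iff.mp hl), pow_succ', mul_assoc]

theorem commute_completeHomogeneous {a b c : R} (ha : Commute c a) (hb : Commute c b) (k : ℕ) :
    Commute c (completeHomogeneous a b k) :=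
  Commute.sum_right _ _ _ fun l _ => (ha.pow_right (k - l)).mul_right (hb.pow_right l)

end Semiring

theorem hasSum_succ_sub_mul_pow_succ {R : Type*} [Ring R] [TopologicalSpace R]
    [IsTopologicalRing R] {c : ℕ → R} {u G : R} (a : R) (hG : HasSum (fun k => c k * u ^ k) G) :
    HasSum (fun k => (c (k + 1) - a * c k) * u ^ (k + 1)) (G - c 0 - a * G * u) := by
  have shifted : HasSum (fun k => c (k + 1) * u ^ (k + 1)) (G - c 0) := by
    simpa using (hasSum_nat_add_iff' 1).mpr hG
  refine (shifted.sub ((hG.mul_left a).mul_right u)).congr_fun fun k => ?_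
  simp only [sub_mul, pow_succ, mul_assoc]

section NormedRing

variable {R : Type*} [NormedRing R] [NormOneClass R]

theorem norm_completeHomogeneous_mul_pow_le (a b u : R) (k : ℕ) :
    ‖completeHomogeneous a b k * u ^ k‖ ≤
      ∑ l ∈ Finset.range (k + 1), (‖b‖ * ‖u‖) ^ l * (‖a‖ * ‖u‖) ^ (k - l) := by
  rw [completeHomogeneous, Finset.sum_mul]
  refine norm_sum_le_of_le _ fun l hl => ?_
  have hlk : l + (k - l) = k := Nat.add_sub_cancel' (Finset.mem_range_succ_iff.mp hl)
  calc ‖a ^ (k - l) * b ^ l * u ^ k‖ ≤ ‖a‖ ^ (k - l) * ‖b‖ ^ l * ‖u‖ ^ k :=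
        norm_mul_le_of_le (norm_mul_le_of_le (norm_pow_le a _) (norm_pow_le b l)) (norm_pow_le u k)
    _ = ‖a‖ ^ (k - l) * ‖b‖ ^ l * (‖u‖ ^ l * ‖u‖ ^ (k - l)) := by rw [← pow_add, hlk]
    _ = (‖b‖ * ‖u‖) ^ l * (‖a‖ * ‖u‖) ^ (k - l) := by ring

variable [CompleteSpace R] {a b u : R}

theorem summable_pow_mul_pow (hb : ‖b‖ * ‖u‖ < 1) : Summable fun k : ℕ => b ^ k * u ^ k := by
  refine Summable.of_norm_bounded
    (summable_geometric_of_lt_one (by positivity : 0 ≤ ‖b‖ * ‖u‖) hb) fun k => ?_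
  calc ‖b ^ k * u ^ k‖ ≤ ‖b‖ ^ k * ‖u‖ ^ k :=
        norm_mul_le_of_le (norm_pow_le b k) (norm_pow_le u k)
    _ = (‖b‖ * ‖u‖) ^ k := (mul_pow _ _ _).symm

theorem tsum_pow_mul_pow_sub (hb : ‖b‖ * ‖u‖ < 1) :
    (∑' k : ℕ, b ^ k * u ^ k) - b * (∑' k : ℕ, b ^ k * u ^ k) * u = 1 := by
  have h := hasSum_succ_sub_mul_pow_succ b (summable_pow_mul_pow hb).hasSum
  simp only [pow_succ' b, sub_self, zero_mul, pow_zero] at h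
  have h_zero := h.unique hasSum_zero
  rwa [sub_right_comm, sub_eq_zero] at h_zero

theorem summable_completeHomogeneous_mul_pow (ha : ‖a‖ * ‖u‖ < 1) (hb : ‖b‖ * ‖u‖ < 1) :
    Summable fun k => completeHomogeneous a b k * u ^ k := by
  have hα := (summable_geometric_of_lt_one (by positivity : 0 ≤ ‖a‖ * ‖u‖) ha).norm
  have hβ := (summable_geometric_of_lt_one (by positivity : 0 ≤ ‖b‖ * ‖u‖) hb).norm
  exact Summable.of_norm_bounded
    (summable_norm_sum_mul_range_of_summable_norm hβ hα).of_norm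
    (norm_completeHomogeneous_mul_pow_le a b u)

theorem tsum_completeHomogeneous_mul_pow_sub (ha : ‖a‖ * ‖u‖ < 1) (hb : ‖b‖ * ‖u‖ < 1) :
    (∑' k, completeHomogeneous a b k * u ^ k)
      - a * (∑' k, completeHomogeneous a b k * u ^ k) * u =
      ∑' k : ℕ, b ^ k * u ^ k := by
  have h := hasSum_succ_sub_mul_pow_succ a (summable_completeHomogeneous_mul_pow ha hb).hasSum
  simp only [completeHomogeneous_succ, completeHomogeneous_zero, add_sub_cancel_left] at h
  have tail : HasSum (fun k => b ^ (k + 1) * u ^ (k + 1)) ((∑' k : ℕ, b ^ k * u ^ k) - 1) := by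
    simpa using (hasSum_nat_add_iff' 1).mpr (summable_pow_mul_pow hb).hasSum
  have h_eq := h.unique tail
  rwa [sub_right_comm, sub_left_inj] at h_eq

theorem tsum_completeHomogeneous_mul_pow_sub_add (ha : ‖a‖ * ‖u‖ < 1) (hb : ‖b‖ * ‖u‖ < 1) :
    (∑' k, completeHomogeneous a b k * u ^ k)
      - (a + b) * (∑' k, completeHomogeneous a b k * u ^ k) * u
      + b * a * (∑' k, completeHomogeneous a b k * u ^ k) * u ^ 2 = 1 := by
  have h := tsum_pow_mul_pow_sub hb
  rw [← tsum_completeHomogeneous_mul_pow_sub ha hb] at h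
  rw [← h]
  noncomm_ring

theorem tsum_completeHomogeneous_mul_pow_mul (ha : ‖a‖ * ‖u‖ < 1) (hb : ‖b‖ * ‖u‖ < 1)
    (hab : Commute a b) (hadd : Commute (a + b) u) (hmul : Commute (a * b) u) :
    (∑' k, completeHomogeneous a b k * u ^ k) * (1 - (a + b) * u + a * b * u ^ 2) = 1 := by
  have commute_tsum {c : R} (hca : Commute c a) (hcb : Commute c b) (hcu : Commute c u) :
      Commute c (∑' k, completeHomogeneous a b k * u ^ k) :=
    Commute.tsum_right c fun k =>
      (commute_completeHomogeneous hca hcb k).mul_right (hcu.pow_right k)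
  have hadd_tsum := commute_tsum ((Commute.refl a).add_left hab.symm)
    (hab.add_left (Commute.refl b)) hadd
  have hmul_tsum := commute_tsum ((Commute.refl a).mul_left hab.symm)
    (hab.mul_left (Commute.refl b)) hmul
  have h := tsum_completeHomogeneous_mul_pow_sub_add ha hb
  rw [← hab.eq, hadd_tsum.eq, hmul_tsum.eq] at h
  rwa [mul_add, mul_sub, mul_one, ← mul_assoc, ← mul_assoc]

end NormedRing

theorem inv_sq_mul_sq_sub_mul_add {K : Type*} [DivisionRing K] {s t n : K} (hs : s ≠ 0)
    (ht : Commute t s) (hn : Commute n s) :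
    s⁻¹ ^ 2 * (s ^ 2 - t * s + n) = 1 - t * s⁻¹ + n * s⁻¹ ^ 2 := by
  have ht_inv : s⁻¹ ^ 2 * (t * s) = t * s⁻¹ := by
    rw [← mul_assoc, (ht.inv_right₀.pow_right 2).symm.eq, mul_assoc, sq, mul_assoc,
      inv_mul_cancel₀ hs, mul_one]
  rw [mul_add, mul_sub, ht_inv, (hn.inv_right₀.pow_right 2).symm.eq, inv_pow,
    inv_mul_cancel₀ (pow_ne_zero 2 hs)]

theorem statement9_general {K : Type*} [NormedDivisionRing K] [CompleteSpace K] {a b s : K}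
    (ha : ‖a‖ < ‖s‖) (hb : ‖b‖ < ‖s‖) (hab : Commute a b) (hadd : Commute (a + b) s)
    (hmul : Commute (a * b) s) :
    s ≠ 0 ∧
    s ^ 2 - (a + b) * s + a * b ≠ 0 ∧
    Summable (fun k => completeHomogeneous a b k * (s ^ (k + 2))⁻¹) ∧
    ∑' k, completeHomogeneous a b k * (s ^ (k + 2))⁻¹ = (s ^ 2 - (a + b) * s + a * b)⁻¹ := by
  have hs_norm : 0 < ‖s‖ := (norm_nonneg a).trans_lt ha
  have hs : s ≠ 0 := norm_pos_iff.mp hs_norm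
  have mul_norm_inv_lt_one {c : K} (hc : ‖c‖ < ‖s‖) : ‖c‖ * ‖s⁻¹‖ < 1 := by
    rwa [norm_inv, ← div_eq_mul_inv, div_lt_one hs_norm]
  have hterm (k : ℕ) : completeHomogeneous a b k * (s ^ (k + 2))⁻¹ =
      completeHomogeneous a b k * s⁻¹ ^ k * s⁻¹ ^ 2 := by
    rw [← inv_pow, pow_add, mul_assoc]
  have hsum := summable_completeHomogeneous_mul_pow (mul_norm_inv_lt_one ha)
    (mul_norm_inv_lt_one hb)
  have hinv := tsum_completeHomogeneous_mul_pow_mul (mul_norm_inv_lt_one ha)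
    (mul_norm_inv_lt_one hb) hab hadd.inv_right₀ hmul.inv_right₀
  rw [← inv_sq_mul_sq_sub_mul_add hs hadd hmul, ← mul_assoc, ← hsum.tsum_mul_right] at hinv
  simp only [hterm]
  exact ⟨hs, right_ne_zero_of_mul_eq_one hinv, hsum.mul_right _, eq_inv_of_mul_eq_one_left hinv⟩

theorem self_mul_star_eq_coe_norm_sq (x : ℍ[ℝ]) : x * star x = ((‖x‖ ^ 2 : ℝ) : ℍ[ℝ]) := by
  rw [Quaternion.self_mul_star, Quaternion.normSq_eq_norm_mul_self, sq]

/-- For quaternions `x, s` with `‖x‖ < ‖s‖`: `s ≠ 0`, the commutative pseudo-Cauchy kernel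
`Q_{c,s}(x) = s² − 2(re x)·s + ‖x‖²` is nonzero, the family `k ↦ H_k(x)·(s^{k+2})⁻¹` is
summable, and its sum equals `(s² − 2(re x)·s + ‖x‖²)⁻¹`. -/
theorem statement9 (x s : ℍ[ℝ]) (hxs : ‖x‖ < ‖s‖) :
    s ≠ 0 ∧
    (s ^ 2 - 2 * ((x.re : ℝ) : ℍ[ℝ]) * s + ((‖x‖ ^ 2 : ℝ) : ℍ[ℝ])) ≠ 0 ∧
    Summable (fun k : ℕ => Hpoly x k * (s ^ (k + 2))⁻¹) ∧
    ∑' k : ℕ, Hpoly x k * (s ^ (k + 2))⁻¹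
      = (s ^ 2 - 2 * ((x.re : ℝ) : ℍ[ℝ]) * s + ((‖x‖ ^ 2 : ℝ) : ℍ[ℝ]))⁻¹ := by
  rw [← Quaternion.self_add_star, ← self_mul_star_eq_coe_norm_sq]
  exact statement9_general hxs (by rwa [Quaternion.norm_star]) (star_comm_self' x).symm
    (Quaternion.self_add_star' x ▸ Quaternion.coe_commute _ s)
    (self_mul_star_eq_coe_norm_sq x ▸ Quaternion.coe_commute _ s)
end

section
/- Let s, x ∈ ℍ with Q_{c,s}(x) := s² − 2(re x)·s + ‖x‖² ≠ 0, and let m ∈ ℕ. Define G : ℍ → ℍ by G(y) = (s² − 2(re y)·s + ‖y‖²)^{−m}. Then G is (real) differentiable at x and (D̄ G)(x) := ∂₀G(x) − i·∂₁G(x) − j·∂₂G(x) − k·∂₃G(x) = 2m · (s − x̄) · Q_{c,s}(x)^{−m−1}. -/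
open Quaternion

/-- The basis quaternion `i`. -/
def qi : ℍ[ℝ] := ⟨0, 1, 0, 0⟩
/-- The basis quaternion `j`. -/
def qj : ℍ[ℝ] := ⟨0, 0, 1, 0⟩
/-- The basis quaternion `k`. -/
def qk : ℍ[ℝ] := ⟨0, 0, 0, 1⟩

/-- The conjugate Cauchy–Fueter operator
`(D̄ G)(x) = ∂₀G(x) − i·∂₁G(x) − j·∂₂G(x) − k·∂₃G(x)`, where `∂_μG(x)` is the real Fréchet
derivative of `G` at `x` applied to the basis quaternion `e_μ`. -/
noncomputable def DiracBar (G : ℍ[ℝ] → ℍ[ℝ]) (x : ℍ[ℝ]) : ℍ[ℝ] :=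
  fderiv ℝ G x 1 - qi * fderiv ℝ G x qi - qj * fderiv ℝ G x qj - qk * fderiv ℝ G x qk

/-- The commutative pseudo-Cauchy kernel `Q_{c,s}(y) = s² − 2(re y)·s + ‖y‖²`. -/
noncomputable def Qcs (s y : ℍ[ℝ]) : ℍ[ℝ] :=
  s ^ 2 - 2 * ((y.re : ℝ) : ℍ[ℝ]) * s + ((‖y‖ ^ 2 : ℝ) : ℍ[ℝ])

/-!
The directional derivative `∂_h Q_{c,s}(x) = 2⟨x, h⟩ - 2⟨1, h⟩ s` is a polynomial in `s` with real
coefficients, so it commutes with `Q_{c,s}(x)`. The power rule therefore takes its commutative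
form, with the power of `Q_{c,s}(x)` on the right, where it factors out of `D̄` because the units
`i, j, k` act on the left. Finally `D̄ Q_{c,s}(x) = 2 x̄ - 2 s` by the basis expansion
`x̄ = ⟨x, 1⟩ - ⟨x, i⟩ i - ⟨x, j⟩ j - ⟨x, k⟩ k`, applied to `x` and to `1`.
-/

section CommutingDerivative

open scoped RightActions

variable {𝕜 E : Type*} [NontriviallyNormedField 𝕜] [NormedAddCommGroup E] [NormedSpace 𝕜 E]
  {x : E}

theorem hasFDerivAt_pow_of_commute {A : Type*} [NormedRing A] [NormedAlgebra 𝕜 A] {f : E → A}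
    {f' : E →L[𝕜] A} (hf : HasFDerivAt f f' x) (hcomm : ∀ h, Commute (f' h) (f x)) (n : ℕ) :
    HasFDerivAt (fun y => f y ^ n) (n • (f' <• f x ^ (n - 1))) x := by
  refine (hf.fun_pow' n).congr_fderiv ?_
  ext h
  have hterm (i : ℕ) (hi : i ∈ Finset.range n) :
      f x ^ (n - 1 - i) * (f' h * f x ^ i) = f' h * f x ^ (n - 1) := by
    rw [← mul_assoc, ← ((hcomm h).pow_right _).eq, mul_assoc, ← pow_add,
      Nat.sub_add_cancel (Nat.le_sub_one_of_lt (Finset.mem_range.mp hi))]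
  simpa [sum_apply, mul_assoc] using Finset.sum_congr rfl hterm

variable {R : Type*} [NormedDivisionRing R] [NormedAlgebra 𝕜 R] {f : E → R}
  {f' : E →L[𝕜] R}

theorem hasFDerivAt_inv_of_commute (hf : HasFDerivAt f f' x)
    (hcomm : ∀ h, Commute (f' h) (f x)) (hx : f x ≠ 0) :
    HasFDerivAt (fun y => (f y)⁻¹) (-(f' <• (f x ^ 2)⁻¹)) x := by
  refine ((hasFDerivAt_inv' hx).comp x hf).congr_fderiv ?_
  ext h
  simp [← (hcomm h).inv_right₀.eq, mul_assoc, sq]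

theorem hasFDerivAt_zpow_of_commute (hf : HasFDerivAt f f' x)
    (hcomm : ∀ h, Commute (f' h) (f x)) (n : ℤ) (hx : f x ≠ 0 ∨ 0 ≤ n) :
    HasFDerivAt (fun y => f y ^ n) (n • (f' <• f x ^ (n - 1))) x := by
  obtain ⟨m, rfl | rfl⟩ := n.eq_nat_or_neg
  · simp only [zpow_natCast]
    refine (hasFDerivAt_pow_of_commute hf hcomm m).congr_fderiv ?_
    rcases m with _ | m
    · simp
    · rw [natCast_zsmul, Nat.add_sub_cancel, Nat.cast_succ, add_sub_cancel_right, zpow_natCast]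
  · rcases m with _ | m
    · simpa using! hasFDerivAt_const (1 : R) x
    have hne : f x ≠ 0 := hx.resolve_right (by lia)
    have hcomm_inv (h : E) : Commute ((-(f' <• (f x ^ 2)⁻¹)) h) (f x)⁻¹ :=
      (((hcomm h).mul_left ((Commute.refl (f x)).pow_left 2).inv_left₀).inv_right₀).neg_left
    have hexp : (f x ^ 2)⁻¹ * (f x)⁻¹ ^ m = f x ^ (-((m + 1 : ℕ) : ℤ) - 1) := by
      rw [← inv_pow, ← pow_add, inv_pow, ← zpow_natCast, ← zpow_neg]
      congr 1
      lia
    have hinv := hasFDerivAt_inv_of_commute hf hcomm hne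
    simp only [zpow_neg, zpow_natCast, ← inv_pow]
    refine (hasFDerivAt_pow_of_commute hinv hcomm_inv (m + 1)).congr_fderiv ?_
    simp only [Nat.add_sub_cancel, neg_smul, natCast_zsmul, smul_neg, ← hexp, MulOpposite.op_mul,
      mul_smul]

end CommutingDerivative

open scoped RealInnerProductSpace

theorem diracBar_zpow_of_commute {f : ℍ[ℝ] → ℍ[ℝ]} {x : ℍ[ℝ]} (hf : DifferentiableAt ℝ f x)
    (hcomm : ∀ h, Commute (fderiv ℝ f x h) (f x)) (n : ℤ) (hx : f x ≠ 0 ∨ 0 ≤ n) :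
    DiracBar (fun y => f y ^ n) x = n • (DiracBar f x * f x ^ (n - 1)) := by
  simp only [DiracBar, (hasFDerivAt_zpow_of_commute hf.hasFDerivAt hcomm n hx).fderiv, smul_apply,
    MulOpposite.smul_eq_mul_unop, MulOpposite.unop_op, mul_smul_comm, ← mul_assoc, ← smul_sub,
    ← sub_mul]

theorem inner_smul_one_sub_basis_eq_star (a : ℍ[ℝ]) :
    ⟪a, 1⟫ • (1 : ℍ[ℝ]) - ⟪a, qi⟫ • qi - ⟪a, qj⟫ • qj - ⟪a, qk⟫ • qk = star a := by
  ext <;>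
    simp only [Quaternion.inner_def, Quaternion.re_mul, Quaternion.re_sub, Quaternion.imI_sub,
      Quaternion.imJ_sub, Quaternion.imK_sub, Quaternion.re_smul, Quaternion.imI_smul,
      Quaternion.imJ_smul, Quaternion.imK_smul, Quaternion.re_star, Quaternion.imI_star,
      Quaternion.imJ_star, Quaternion.imK_star] <;>
    simp [qi, qj, qk]

theorem Qcs_eq_inner (s y : ℍ[ℝ]) :
    Qcs s y = s ^ 2 - (2 * ⟪1, y⟫) • s + (‖y‖ ^ 2) • (1 : ℍ[ℝ]) := by
  simp only [Qcs, real_inner_comm y, Quaternion.inner_def, star_one, mul_one, two_mul, add_smul,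
    add_mul, ← Quaternion.coe_mul_eq_smul]

theorem hasFDerivAt_Qcs (s x : ℍ[ℝ]) :
    HasFDerivAt (Qcs s)
      ((2 • innerSL ℝ x).smulRight (1 : ℍ[ℝ]) - (2 • innerSL ℝ (1 : ℍ[ℝ])).smulRight s) x := by
  have hinner : HasFDerivAt (fun y : ℍ[ℝ] => 2 * ⟪1, y⟫) (2 • innerSL ℝ (1 : ℍ[ℝ])) x := by
    simpa using! (innerSL ℝ (1 : ℍ[ℝ])).hasFDerivAt.const_smul (2 : ℕ) (x := x)
  have hnorm : HasFDerivAt (fun y : ℍ[ℝ] => ‖y‖ ^ 2) (2 • innerSL ℝ x) x :=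
    (hasStrictFDerivAt_norm_sq x).hasFDerivAt
  rw [funext (Qcs_eq_inner s)]
  refine (((hinner.smul_const s).const_sub (s ^ 2)).add (hnorm.smul_const 1)).congr_fderiv ?_
  abel

theorem fderiv_Qcs_apply (s x h : ℍ[ℝ]) :
    fderiv ℝ (Qcs s) x h = (2 * ⟪x, h⟫) • (1 : ℍ[ℝ]) - (2 * ⟪1, h⟫) • s := by
  simp [(hasFDerivAt_Qcs s x).fderiv]

theorem commute_Qcs (s y : ℍ[ℝ]) : Commute s (Qcs s y) := by
  rw [Qcs_eq_inner]
  exact (((Commute.refl s).pow_right 2).sub_right ((Commute.refl s).smul_right _)).add_right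
    ((Commute.one_right s).smul_right _)

theorem commute_fderiv_Qcs (s x h : ℍ[ℝ]) : Commute (fderiv ℝ (Qcs s) x h) (Qcs s x) := by
  rw [fderiv_Qcs_apply]
  exact ((Commute.one_left _).smul_left _).sub_left ((commute_Qcs s x).smul_left _)

theorem diracBar_Qcs (s x : ℍ[ℝ]) : DiracBar (Qcs s) x = (-2 : ℝ) • (s - star x) := by
  calc DiracBar (Qcs s) x
      = (2 : ℝ) • (⟪x, 1⟫ • (1 : ℍ[ℝ]) - ⟪x, qi⟫ • qi - ⟪x, qj⟫ • qj - ⟪x, qk⟫ • qk)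
        - (2 : ℝ) • ((⟪(1 : ℍ[ℝ]), 1⟫ • (1 : ℍ[ℝ]) - ⟪1, qi⟫ • qi - ⟪1, qj⟫ • qj - ⟪1, qk⟫ • qk)
          * s) := by
        simp only [DiracBar, fderiv_Qcs_apply, mul_sub, sub_mul, mul_smul_comm, smul_mul_assoc,
          mul_one, one_mul, smul_sub, smul_smul]
        abel
    _ = (2 : ℝ) • star x - (2 : ℝ) • (star 1 * s) := by
        simp only [inner_smul_one_sub_basis_eq_star]
    _ = (-2 : ℝ) • (s - star x) := by
        rw [star_one, one_mul]
        module

theorem statement11_general (s x : ℍ[ℝ]) (n : ℤ) (hQ : Qcs s x ≠ 0 ∨ 0 ≤ n) :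
    DifferentiableAt ℝ (fun y => Qcs s y ^ n) x ∧
    DiracBar (fun y => Qcs s y ^ n) x
      = (-2 * (n : ℝ)) • ((s - star x) * Qcs s x ^ (n - 1)) := by
  have hdiff : DifferentiableAt ℝ (Qcs s) x := (hasFDerivAt_Qcs s x).differentiableAt
  have hcomm := commute_fderiv_Qcs s x
  refine ⟨(hasFDerivAt_zpow_of_commute hdiff.hasFDerivAt hcomm n hQ).differentiableAt, ?_⟩
  rw [diracBar_zpow_of_commute hdiff hcomm n hQ, diracBar_Qcs, smul_mul_assoc,
    ← Int.cast_smul_eq_zsmul ℝ, smul_smul, mul_comm]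

/-- For `Q_{c,s}(x) ≠ 0` and `m ∈ ℕ`, the map `G(y) = Q_{c,s}(y)^{−m}` is real differentiable
at `x` and `(D̄ G)(x) = 2m·(s − x̄)·Q_{c,s}(x)^{−m−1}`. -/
theorem statement11 (s x : ℍ[ℝ]) (hQ : Qcs s x ≠ 0) (m : ℕ) :
    DifferentiableAt ℝ (fun y => Qcs s y ^ (-(m : ℤ))) x ∧
    DiracBar (fun y => Qcs s y ^ (-(m : ℤ))) x
      = ((2 * (m : ℝ) : ℝ) : ℍ[ℝ]) * ((s - star x) * Qcs s x ^ (-(m : ℤ) - 1)) := by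
  simpa only [Int.cast_neg, Int.cast_natCast, neg_mul_neg, Quaternion.coe_mul_eq_smul] using
    statement11_general s x (-m) (.inl hQ)
end
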